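/- Fix E and δ with 0 < δ < L(E), where L(E) is the Lyapunov exponent (assumed to exist). Then for all sufficiently large k (depending on E and δ), for every x in the circle and every n ∈ ℤ: if n is (x, L(E) − δ, q_k)-singular, then |P_{q_k}(T^a x, E)| ≤ e^{q_k(L(E) − δ/10)} for every integer a in the interval [n − ⌊3q_k/4⌋, n − ⌊q_k/4⌋]. Furthermore the number N_k = ⌊3q_k/4⌋ − ⌊q_k/4⌋ + 1 of such integers a satisfies (q_k + 1)/2 ≤ N_k ≤ (q_k + 3)/2. -/

import Mathlib

/-!
Suppose `|P_q(T^a x, E)| > exp (q (L - δ/10))` for some `a` with `q/4 ≲ n - a ≲ 3q/4`. By Cramer's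
rule the two Green function entries of the box `[a, a + q - 1]` are, up to sign, the determinants
of the blocks to the right and to the left of `n` divided by `P_q(T^a x, E)`. These determinants are
entries of transfer matrices, hence at most `exp (m (L + δ/20))` for a block of length `m`, once
the growth of the transfer matrices is bounded by the Lyapunov exponent uniformly in the phase. The
quotients are then small enough to make `n` regular.

For the uniform bound, the distribution function of `ν` semiconjugates `T` to the translation by
`α`. Since `ν` charges every interval, points with nearby images under it are nearby, so, `α` being
irrational, any orbit follows any other one modulo `1` after a bounded time shift. Hence Birkhoff
sums of a bounded periodic `g` along one orbit are bounded, up to a constant, by those of the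
envelope `sup_{B(·, r)} g` along any other orbit. Integrating over the second orbit and letting
`r → 0`, where `ν`-almost everywhere continuity of `g` and dominated convergence apply, gives a
uniform bound by `n (∫ g dν + ε) + C`. This is applied to `g = log (2 ‖M_N‖)` and `T^N`, cutting
`M_n` into blocks of length `N`.
-/

open MeasureTheory Polynomial Filter

noncomputable section

attribute [local instance] Matrix.normedAddCommGroup

/-- Dirichlet restriction `H_n(x)` of the Schrödinger operator with potential
`n ↦ λ f (T^n x)` to `[0, n-1]`: tridiagonal with diagonal `λ f (T^j x)` and `1`
on the two off-diagonals. -/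
def HDir (lam : ℝ) (f : ℝ → ℝ) (T : Equiv.Perm ℝ) (x : ℝ) (n : ℕ) :
    Matrix (Fin n) (Fin n) ℝ :=
  Matrix.of fun i j : Fin n =>
    (if i = j then lam * f ((T ^ (i : ℕ)) x) else 0) +
    (if (i : ℕ) + 1 = (j : ℕ) ∨ (j : ℕ) + 1 = (i : ℕ) then 1 else 0)

/-- Periodic restriction `H̃_n(x)`: the Dirichlet restriction with additional
entries `1` in the corners `(0, n-1)` and `(n-1, 0)`. -/
def HPer (lam : ℝ) (f : ℝ → ℝ) (T : Equiv.Perm ℝ) (x : ℝ) (n : ℕ) :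
    Matrix (Fin n) (Fin n) ℝ :=
  HDir lam f T x n +
    Matrix.of (fun i j : Fin n =>
      if ((i : ℕ) = 0 ∧ (j : ℕ) = n - 1) ∨ ((i : ℕ) = n - 1 ∧ (j : ℕ) = 0) then (1 : ℝ) else 0)

/-- `P_n(x,E) = det (H_n(x) - E)`. -/
def Pdet (lam : ℝ) (f : ℝ → ℝ) (T : Equiv.Perm ℝ) (x E : ℝ) (n : ℕ) : ℝ :=
  (HDir lam f T x n - E • (1 : Matrix (Fin n) (Fin n) ℝ)).det

/-- `P_n(x,E)` with integer index, with the conventions `P_0 = 1` and `P_n = 0` for `n < 0`. -/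
def PdetI (lam : ℝ) (f : ℝ → ℝ) (T : Equiv.Perm ℝ) (x E : ℝ) (n : ℤ) : ℝ :=
  if 0 ≤ n then Pdet lam f T x E n.toNat else 0

/-- `P̃_n(x,E) = det (H̃_n(x) - E)`. -/
def PtildeDet (lam : ℝ) (f : ℝ → ℝ) (T : Equiv.Perm ℝ) (x E : ℝ) (n : ℕ) : ℝ :=
  (HPer lam f T x n - E • (1 : Matrix (Fin n) (Fin n) ℝ)).det

/-- One-step transfer matrix `A_i(x,E)`. -/
def transferA (lam : ℝ) (f : ℝ → ℝ) (T : Equiv.Perm ℝ) (E x : ℝ) (i : ℕ) :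
    Matrix (Fin 2) (Fin 2) ℝ :=
  !![E - lam * f ((T ^ i) x), -1; 1, 0]

/-- `n`-step transfer matrix `M_n(x,E) = A_{n-1} ⋯ A_0`. -/
def transferM (lam : ℝ) (f : ℝ → ℝ) (T : Equiv.Perm ℝ) (E x : ℝ) :
    ℕ → Matrix (Fin 2) (Fin 2) ℝ
  | 0 => 1
  | m + 1 => transferA lam f T E x m * transferM lam f T E x m

/-- Dirichlet restriction `H_{[a, a+m-1]}(x)` of the operator to the integer
interval starting at `a : ℤ` of length `m`. -/
def HBox (lam : ℝ) (f : ℝ → ℝ) (T : Equiv.Perm ℝ) (x : ℝ) (a : ℤ) (m : ℕ) :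
    Matrix (Fin m) (Fin m) ℝ :=
  Matrix.of fun i j : Fin m =>
    (if i = j then lam * f ((T ^ (a + ((i : ℕ) : ℤ))) x) else 0) +
    (if (i : ℕ) + 1 = (j : ℕ) ∨ (j : ℕ) + 1 = (i : ℕ) then 1 else 0)

/-- Green function `G_{x,E,[a,a+m-1]} = (H_{[a,a+m-1]}(x) - E)⁻¹`. -/
def GBox (lam : ℝ) (f : ℝ → ℝ) (T : Equiv.Perm ℝ) (x E : ℝ) (a : ℤ) (m : ℕ) :
    Matrix (Fin m) (Fin m) ℝ :=
  (HBox lam f T x a m - E • (1 : Matrix (Fin m) (Fin m) ℝ))⁻¹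

/-- A point `n : ℤ` is `(x, c, qk)`-regular: there is an interval `[a, b]` of length
`qk` (`b = a + qk - 1`) containing `n` with `|n - a| ≥ qk/5`, `|n - b| ≥ qk/5` and
`|G(a,n)| ≤ e^{-c|n-a|}`, `|G(n,b)| ≤ e^{-c|n-b|}`. -/
def RegularPt (lam : ℝ) (f : ℝ → ℝ) (T : Equiv.Perm ℝ) (x E c : ℝ) (qk : ℕ) (n : ℤ) : Prop :=
  ∃ (a : ℤ) (i0 i j : Fin qk),
    (i0 : ℕ) = 0 ∧ (j : ℕ) = qk - 1 ∧ n = a + ((i : ℕ) : ℤ) ∧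
    (qk : ℝ) / 5 ≤ ((i : ℕ) : ℝ) ∧ (qk : ℝ) / 5 ≤ ((j : ℕ) : ℝ) - ((i : ℕ) : ℝ) ∧
    |GBox lam f T x E a qk i0 i| ≤ Real.exp (-c * ((i : ℕ) : ℝ)) ∧
    |GBox lam f T x E a qk i j| ≤ Real.exp (-c * (((j : ℕ) : ℝ) - ((i : ℕ) : ℝ)))

/-- The `ν`-measure of the positively oriented arc of the circle `ℝ/ℤ` from `u` to `v`
(computed for a `1`-periodic measure `ν` on `ℝ`). -/
def arcMeasure (ν : Measure ℝ) (u v : ℝ) : ℝ :=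
  (ν (Set.Icc u (u + Int.fract (v - u)))).toReal

/-- The `ν`-measure of the smaller of the two complementary arcs between `u` and `v`. -/
def arcDist (ν : Measure ℝ) (u v : ℝ) : ℝ :=
  min (arcMeasure ν u v) (arcMeasure ν v u)

/-- The measure of the gap of the orbit point `T^j x` in the partition of the circle
by `x, Tx, …, T^{qk-1}x`: the measure of the positively oriented arc from `T^j x` to the
closest (in the positive direction) other orbit point. -/
def gapMeas (ν : Measure ℝ) (T : Equiv.Perm ℝ) (x : ℝ) (qk : ℕ) (j : ℕ) : ℝ :=
  sInf ((fun j' : ℕ => arcMeasure ν ((T ^ j) x) ((T ^ j') x)) '' {j' | j' < qk ∧ j' ≠ j})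

/-- `β(α) = limsup_k (ln q_{k+1}) / q_k` computed from the sequence of
continued-fraction denominators. -/
def cfBeta (q : ℕ → ℕ) : ℝ :=
  Filter.limsup (fun k : ℕ => Real.log (q (k + 1) : ℝ) / (q k : ℝ)) Filter.atTop

/-! ### Jacobi matrices and transfer matrices -/

section JacobiMatrix

variable {R : Type*} [CommRing R] (u : ℕ → R)

/-- The ordered product `A_{n-1} ⋯ A_0` of the transfer matrices `A_i = [[u_i, -1], [1, 0]]` of the
three-term recurrence `ψ_{i+1} + ψ_{i-1} = u_i ψ_i`. -/
def transferProd : ℕ → Matrix (Fin 2) (Fin 2) R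
  | 0 => 1
  | n + 1 => !![u n, -1; 1, 0] * transferProd n

/-- The `n × n` Jacobi matrix with diagonal `u_0, …, u_{n-1}` and off-diagonal entries `-1`; its
diagonal is given by a sequence so that blocks of the matrix are Jacobi matrices of shifts. -/
def jacobiMatrix (n : ℕ) : Matrix (Fin n) (Fin n) R :=
  Matrix.of fun i j =>
    (if i = j then u i else 0) - (if (i : ℕ) + 1 = j ∨ (j : ℕ) + 1 = i then 1 else 0)

lemma transferProd_add (m n : ℕ) :
    transferProd u (m + n) = transferProd (fun i => u (i + n)) m * transferProd u n := by
  induction m with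
  | zero => rw [zero_add, transferProd, one_mul]
  | succ m ih => rw [Nat.succ_add, transferProd, transferProd, ih, Matrix.mul_assoc]

lemma det_transferProd (n : ℕ) : (transferProd u n).det = 1 := by
  induction n with
  | zero => simp [transferProd]
  | succ n ih => rw [transferProd, Matrix.det_mul, ih, Matrix.det_fin_two_of]; ring

lemma transferProd_succ_zero_zero (n : ℕ) :
    transferProd u (n + 1) 0 0 = u n * transferProd u n 0 0 - transferProd u n 1 0 := by
  simp [transferProd, Matrix.mul_apply, Fin.sum_univ_two, sub_eq_add_neg]

lemma transferProd_succ_one_zero (n : ℕ) :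
    transferProd u (n + 1) 1 0 = transferProd u n 0 0 := by
  simp [transferProd, Matrix.mul_apply, Fin.sum_univ_two]

lemma transferProd_add_two_zero_zero (n : ℕ) :
    transferProd u (n + 2) 0 0 =
      u 0 * transferProd (fun i => u (i + 1)) (n + 1) 0 0
        - transferProd (fun i => u (i + 2)) n 0 0 := by
  simp only [transferProd_add _ n 2, transferProd_add _ n 1]
  simp [transferProd, Matrix.mul_apply, Fin.sum_univ_two]
  ring

lemma jacobiMatrix_apply {n : ℕ} (i j : Fin n) :
    jacobiMatrix u n i j =
      (if i = j then u i else 0) - (if (i : ℕ) + 1 = j ∨ (j : ℕ) + 1 = i then 1 else 0) :=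
  rfl

lemma jacobiMatrix_submatrix_succ (n : ℕ) :
    (jacobiMatrix u (n + 1)).submatrix Fin.succ Fin.succ = jacobiMatrix (fun i => u (i + 1)) n := by
  ext i j
  simp [jacobiMatrix_apply]

lemma det_jacobiMatrix_submatrix_succ_one_succAbove (n : ℕ) :
    ((jacobiMatrix u (n + 2)).submatrix Fin.succ (Fin.succAbove 1)).det =
      -(jacobiMatrix (fun i => u (i + 2)) n).det := by
  have minor_eq : ((jacobiMatrix u (n + 2)).submatrix Fin.succ (Fin.succAbove 1)).submatrix
      (Fin.succAbove 0) Fin.succ = jacobiMatrix (fun i => u (i + 2)) n := by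
    ext i j
    simp [jacobiMatrix_apply, Fin.one_succAbove_succ]
  rw [Matrix.det_succ_column_zero, Fin.sum_univ_succ, minor_eq]
  simp [jacobiMatrix_apply]

lemma det_jacobiMatrix_add_two (n : ℕ) :
    (jacobiMatrix u (n + 2)).det =
      u 0 * (jacobiMatrix (fun i => u (i + 1)) (n + 1)).det
        - (jacobiMatrix (fun i => u (i + 2)) n).det := by
  have row_eq_zero (j : Fin n) : jacobiMatrix u (n + 2) 0 j.succ.succ = 0 := by
    simp [jacobiMatrix_apply, Fin.ext_iff]
  rw [Matrix.det_succ_row_zero, Fin.sum_univ_succ, Fin.sum_univ_succ, Fin.succ_zero_eq_one,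
    det_jacobiMatrix_submatrix_succ_one_succAbove, Fin.succAbove_zero, jacobiMatrix_submatrix_succ]
  simp only [row_eq_zero, mul_zero, zero_mul, Finset.sum_const_zero]
  simp [jacobiMatrix_apply, sub_eq_add_neg]

lemma det_jacobiMatrix (n : ℕ) : (jacobiMatrix u n).det = transferProd u n 0 0 := by
  induction n using Nat.twoStepInduction generalizing u with
  | zero => simp [transferProd]
  | one => simp [jacobiMatrix, transferProd]
  | more n ih₀ ih₁ =>
    rw [det_jacobiMatrix_add_two, ih₀, ih₁, transferProd_add_two_zero_zero]

lemma jacobiMatrix_isSymm (n : ℕ) : (jacobiMatrix u n).IsSymm :=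
  Matrix.IsSymm.ext fun i j => by grind [jacobiMatrix_apply]

lemma jacobiMatrix_submatrix_rev (n : ℕ) :
    (jacobiMatrix u n).submatrix Fin.revPerm Fin.revPerm =
      jacobiMatrix (fun k => u (n - 1 - k)) n := by
  ext i j
  simp only [jacobiMatrix_apply, Matrix.submatrix_apply, Fin.revPerm_apply, Fin.rev_inj,
    Fin.val_rev]
  congr 1
  · rw [Nat.sub_add_eq, Nat.sub_right_comm]
  · exact if_congr (by omega) rfl rfl

lemma jacobiMatrix_congr {u v : ℕ → R} {n : ℕ} (h : ∀ i < n, u i = v i) :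
    jacobiMatrix u n = jacobiMatrix v n := by
  ext i j
  simp only [jacobiMatrix_apply, h i i.isLt]

lemma jacobiMatrix_mulVec (n : ℕ) (W : ℕ → R) (hW : W 0 = 0) (i : Fin n) :
    (jacobiMatrix u n).mulVec (fun j => W (j + 1)) i =
      u i * W (i + 1) - W i - (if (i : ℕ) + 1 < n then W (i + 2) else 0) := by
  have row_apply (j : Fin n) : jacobiMatrix u n i j * W (j + 1) =
      (if i = j then u i * W (i + 1) else 0)
        - (if (j : ℕ) + 1 = i then W i else 0) - (if (i : ℕ) + 1 = j then W (i + 2) else 0) := by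
    grind [jacobiMatrix_apply]
  have sum_below : ∑ j : Fin n, (if (j : ℕ) + 1 = i then W i else 0) = W i := by
    rcases hi : (i : ℕ) with _ | k
    · simp [hW]
    · rw [Fin.sum_univ_eq_sum_range (fun j => if j + 1 = k + 1 then W (k + 1) else 0)]
      simp [Finset.sum_ite_eq', (by omega : k < n)]
  have sum_above : ∑ j : Fin n, (if (i : ℕ) + 1 = j then W (i + 2) else 0) =
      if (i : ℕ) + 1 < n then W (i + 2) else 0 := by
    rw [Fin.sum_univ_eq_sum_range (fun j => if (i : ℕ) + 1 = j then W (i + 2) else 0),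
      Finset.sum_ite_eq]
    simp only [Finset.mem_range]
  simp only [Matrix.mulVec, dotProduct, row_apply, Finset.sum_sub_distrib, sum_below, sum_above,
    Finset.sum_ite_eq, Finset.mem_univ, if_true]

lemma jacobiMatrix_mulVec_transferProd (n : ℕ) :
    (jacobiMatrix u (n + 1)).mulVec (fun j => transferProd u j 0 0) =
      Pi.single (Fin.last n) (transferProd u (n + 1) 0 0) := by
  ext i
  simp only [← transferProd_succ_one_zero]
  rw [jacobiMatrix_mulVec u _ (fun j => transferProd u j 1 0) (by simp [transferProd])]
  rw [transferProd_succ_one_zero, transferProd_succ_one_zero, ← transferProd_succ_zero_zero,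
    transferProd_succ_one_zero]
  rcases eq_or_ne i (Fin.last n) with rfl | hi
  · simp
  · rw [Pi.single_eq_of_ne hi, if_pos (by have := Fin.val_lt_last hi; omega), sub_self]

variable {u}

lemma det_mul_inv_jacobiMatrix_last {n : ℕ} (hdet : IsUnit (jacobiMatrix u (n + 1)).det)
    (i : Fin (n + 1)) :
    (jacobiMatrix u (n + 1)).det * (jacobiMatrix u (n + 1))⁻¹ i (Fin.last n) =
      (jacobiMatrix u i).det := by
  have inv_mulVec := congrArg ((jacobiMatrix u (n + 1))⁻¹.mulVec)
    (jacobiMatrix_mulVec_transferProd u n)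
  rw [Matrix.mulVec_mulVec, Matrix.nonsing_inv_mul _ hdet, Matrix.one_mulVec] at inv_mulVec
  have at_i := congrFun inv_mulVec i
  rw [Matrix.mulVec_single] at at_i
  simp only [det_jacobiMatrix, at_i, Pi.smul_apply, Matrix.col_apply, MulOpposite.smul_eq_mul_unop,
    MulOpposite.unop_op, mul_comm]

lemma det_mul_inv_jacobiMatrix_zero {n : ℕ} (hdet : IsUnit (jacobiMatrix u (n + 1)).det)
    (i : Fin (n + 1)) :
    (jacobiMatrix u (n + 1)).det * (jacobiMatrix u (n + 1))⁻¹ 0 i =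
      (jacobiMatrix (fun k => u (k + (i + 1))) (n - i)).det := by
  have inv_symm : (jacobiMatrix u (n + 1))⁻¹ 0 i = (jacobiMatrix u (n + 1))⁻¹ i 0 := by
    rw [← Matrix.transpose_apply (jacobiMatrix u (n + 1))⁻¹, Matrix.transpose_nonsing_inv,
      jacobiMatrix_isSymm]
  have reversed := jacobiMatrix_submatrix_rev u (n + 1)
  have det_reversed := congrArg Matrix.det reversed
  rw [Matrix.det_submatrix_equiv_self] at det_reversed
  have last_column := det_mul_inv_jacobiMatrix_last (det_reversed ▸ hdet) i.rev
  rw [← det_reversed, ← reversed, Matrix.inv_submatrix_equiv, Matrix.submatrix_apply,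
    Fin.revPerm_apply, Fin.revPerm_apply, Fin.rev_rev, Fin.rev_last] at last_column
  rw [inv_symm, last_column, ← Matrix.det_submatrix_equiv_self Fin.revPerm,
    jacobiMatrix_submatrix_rev, Fin.val_rev, Nat.add_sub_add_right]
  congr 1
  exact jacobiMatrix_congr fun k hk => congrArg u (by omega)

end JacobiMatrix

/-! ### Green function and transfer matrices of the Schrödinger operator -/

section Schrodinger

/-- The diagonal `E - λ f (T^i x)`, `i ≥ 0`, of `E - H(x)`. -/
def energyDiagonal (lam : ℝ) (f : ℝ → ℝ) (T : Equiv.Perm ℝ) (E x : ℝ) (i : ℕ) : ℝ :=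
  E - lam * f ((T ^ i) x)

variable (lam : ℝ) (f : ℝ → ℝ) (T : Equiv.Perm ℝ) (E x : ℝ)

lemma energyDiagonal_pow_apply (m i : ℕ) :
    energyDiagonal lam f T E ((T ^ m) x) i = energyDiagonal lam f T E x (i + m) := by
  rw [energyDiagonal, energyDiagonal, pow_add, Equiv.Perm.mul_apply]

lemma transferM_eq_transferProd (n : ℕ) :
    transferM lam f T E x n = transferProd (energyDiagonal lam f T E x) n := by
  induction n with
  | zero => rfl
  | succ n ih => rw [transferM, transferProd, ih, transferA, energyDiagonal]

lemma transferM_add (m n : ℕ) :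
    transferM lam f T E x (m + n) =
      transferM lam f T E ((T ^ n) x) m * transferM lam f T E x n := by
  simp only [transferM_eq_transferProd, transferProd_add, ← energyDiagonal_pow_apply]

lemma HDir_sub_eq_neg_jacobiMatrix (n : ℕ) :
    HDir lam f T x n - E • (1 : Matrix (Fin n) (Fin n) ℝ) =
      -jacobiMatrix (energyDiagonal lam f T E x) n := by
  ext i j
  by_cases h : i = j <;> simp [HDir, jacobiMatrix_apply, energyDiagonal, h]

lemma HBox_eq_HDir (a : ℤ) (n : ℕ) : HBox lam f T x a n = HDir lam f T ((T ^ a) x) n := by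
  ext i j
  simp only [HBox, HDir, Matrix.of_apply, add_comm a, zpow_add, Equiv.Perm.mul_apply, zpow_natCast]

lemma abs_Pdet_eq_abs_det_jacobiMatrix (n : ℕ) :
    |Pdet lam f T x E n| = |(jacobiMatrix (energyDiagonal lam f T E x) n).det| := by
  rw [Pdet, HDir_sub_eq_neg_jacobiMatrix, Matrix.det_neg, abs_mul, abs_neg_one_pow, one_mul]

lemma abs_Pdet_le_norm_transferM (n : ℕ) :
    |Pdet lam f T x E n| ≤ ‖transferM lam f T E x n‖ := by
  rw [abs_Pdet_eq_abs_det_jacobiMatrix, det_jacobiMatrix, ← transferM_eq_transferProd]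
  exact Matrix.norm_entry_le_entrywise_sup_norm (transferM lam f T E x n)

variable {lam f T E x}

lemma isUnit_det_jacobiMatrix_of_Pdet_ne_zero {n : ℕ} (hP : Pdet lam f T x E n ≠ 0) :
    IsUnit (jacobiMatrix (energyDiagonal lam f T E x) n).det := by
  rw [isUnit_iff_ne_zero, ← abs_ne_zero, ← abs_Pdet_eq_abs_det_jacobiMatrix]
  exact abs_ne_zero.mpr hP

lemma abs_GBox_apply {a : ℤ} {n : ℕ} (hP : Pdet lam f T ((T ^ a) x) E n ≠ 0) (i j : Fin n) :
    |GBox lam f T x E a n i j| =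
      |(jacobiMatrix (energyDiagonal lam f T E ((T ^ a) x)) n)⁻¹ i j| := by
  have inv_neg : (-jacobiMatrix (energyDiagonal lam f T E ((T ^ a) x)) n)⁻¹ =
      -(jacobiMatrix (energyDiagonal lam f T E ((T ^ a) x)) n)⁻¹ := by
    refine Matrix.inv_eq_left_inv ?_
    rw [neg_mul_neg, Matrix.nonsing_inv_mul _ (isUnit_det_jacobiMatrix_of_Pdet_ne_zero hP)]
  rw [GBox, HBox_eq_HDir, HDir_sub_eq_neg_jacobiMatrix, inv_neg, Matrix.neg_apply, abs_neg]

lemma abs_Pdet_mul_abs_GBox_zero {a : ℤ} {n : ℕ} (hP : Pdet lam f T ((T ^ a) x) E (n + 1) ≠ 0)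
    (i : Fin (n + 1)) :
    |Pdet lam f T ((T ^ a) x) E (n + 1)| * |GBox lam f T x E a (n + 1) 0 i| =
      |Pdet lam f T ((T ^ ((i : ℕ) + 1)) ((T ^ a) x)) E (n - i)| := by
  rw [abs_GBox_apply hP, abs_Pdet_eq_abs_det_jacobiMatrix, ← abs_mul,
    det_mul_inv_jacobiMatrix_zero (isUnit_det_jacobiMatrix_of_Pdet_ne_zero hP),
    abs_Pdet_eq_abs_det_jacobiMatrix]
  simp only [← energyDiagonal_pow_apply]

lemma abs_Pdet_mul_abs_GBox_last {a : ℤ} {n : ℕ} (hP : Pdet lam f T ((T ^ a) x) E (n + 1) ≠ 0)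
    (i : Fin (n + 1)) :
    |Pdet lam f T ((T ^ a) x) E (n + 1)| * |GBox lam f T x E a (n + 1) i (Fin.last n)| =
      |Pdet lam f T ((T ^ a) x) E i| := by
  rw [abs_GBox_apply hP, abs_Pdet_eq_abs_det_jacobiMatrix, ← abs_mul,
    det_mul_inv_jacobiMatrix_last (isUnit_det_jacobiMatrix_of_Pdet_ne_zero hP),
    abs_Pdet_eq_abs_det_jacobiMatrix]

end Schrodinger

/-! ### Norms of transfer matrices -/

section TransferNorm

lemma norm_matrix_mul_le {l m n : Type*} [Fintype l] [Fintype m] [Fintype n]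
    (A : Matrix l m ℝ) (B : Matrix m n ℝ) : ‖A * B‖ ≤ Fintype.card m * (‖A‖ * ‖B‖) := by
  refine (Matrix.norm_le_iff (by positivity)).mpr fun i j => ?_
  calc ‖(A * B) i j‖ ≤ ∑ k, ‖A i k * B k j‖ := norm_sum_le _ _
    _ ≤ ∑ _k : m, ‖A‖ * ‖B‖ := Finset.sum_le_sum fun k _ => by
        rw [norm_mul]
        gcongr <;> apply Matrix.norm_entry_le_entrywise_sup_norm
    _ = Fintype.card m * (‖A‖ * ‖B‖) := by simp

lemma one_le_two_mul_norm_transferProd (u : ℕ → ℝ) (n : ℕ) : 1 ≤ 2 * ‖transferProd u n‖ := by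
  have one_le_two_mul_sq : 1 ≤ 2 * ‖transferProd u n‖ ^ 2 := by
    simpa [det_transferProd] using Matrix.det_le (A := transferProd u n) (abv := AbsoluteValue.abs)
      fun i j => Matrix.norm_entry_le_entrywise_sup_norm (transferProd u n)
  nlinarith [norm_nonneg (transferProd u n)]

lemma norm_transferProd_le {u : ℕ → ℝ} {K : ℝ} (hu : ∀ i, |u i| ≤ K) (n : ℕ) :
    ‖transferProd u n‖ ≤ (2 * (K + 1)) ^ n := by
  have hK : 0 ≤ K := (abs_nonneg _).trans (hu 0)
  induction n with
  | zero =>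
    rw [transferProd, pow_zero]
    refine (Matrix.norm_le_iff zero_le_one).mpr fun i j => ?_
    fin_cases i <;> fin_cases j <;> simp
  | succ n ih =>
    have norm_factor : ‖!![u n, -1; 1, 0]‖ ≤ K + 1 := by
      refine (Matrix.norm_le_iff (by positivity)).mpr fun i j => ?_
      fin_cases i <;> fin_cases j <;> simp [hK, add_nonneg, (hu n).trans]
    calc ‖transferProd u (n + 1)‖ ≤ 2 * (‖!![u n, -1; 1, 0]‖ * ‖transferProd u n‖) := by
          simpa [transferProd] using norm_matrix_mul_le !![u n, -1; 1, 0] (transferProd u n)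
      _ ≤ 2 * ((K + 1) * (2 * (K + 1)) ^ n) := by gcongr
      _ = (2 * (K + 1)) ^ (n + 1) := by ring

/-- `log (2 ‖M_n(x, E)‖)`. The norm is the largest modulus of an entry, which is submultiplicative
only up to the factor `2`; including it makes this cocycle subadditive. -/
def logTransfer (lam : ℝ) (f : ℝ → ℝ) (T : Equiv.Perm ℝ) (E : ℝ) (n : ℕ) (x : ℝ) : ℝ :=
  Real.log (2 * ‖transferM lam f T E x n‖)

variable (lam : ℝ) (f : ℝ → ℝ) (T : Equiv.Perm ℝ) (E : ℝ)

lemma one_le_two_mul_norm_transferM (n : ℕ) (x : ℝ) : 1 ≤ 2 * ‖transferM lam f T E x n‖ := by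
  rw [transferM_eq_transferProd]
  exact one_le_two_mul_norm_transferProd _ n

lemma logTransfer_nonneg (n : ℕ) (x : ℝ) : 0 ≤ logTransfer lam f T E n x :=
  Real.log_nonneg (one_le_two_mul_norm_transferM lam f T E n x)

lemma norm_transferM_pos (n : ℕ) (x : ℝ) : 0 < ‖transferM lam f T E x n‖ := by
  linarith [one_le_two_mul_norm_transferM lam f T E n x]

lemma logTransfer_eq (n : ℕ) (x : ℝ) :
    logTransfer lam f T E n x = Real.log 2 + Real.log ‖transferM lam f T E x n‖ :=
  Real.log_mul two_ne_zero (norm_transferM_pos lam f T E n x).ne'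

lemma norm_transferM_le_exp_logTransfer (n : ℕ) (x : ℝ) :
    ‖transferM lam f T E x n‖ ≤ Real.exp (logTransfer lam f T E n x) := by
  rw [logTransfer, Real.exp_log (by linarith [norm_transferM_pos lam f T E n x])]
  linarith [norm_nonneg (transferM lam f T E x n)]

lemma logTransfer_add_le (m n : ℕ) (x : ℝ) :
    logTransfer lam f T E (m + n) x ≤
      logTransfer lam f T E m ((T ^ n) x) + logTransfer lam f T E n x := by
  have norm_add_le : ‖transferM lam f T E x (m + n)‖ ≤
      2 * (‖transferM lam f T E ((T ^ n) x) m‖ * ‖transferM lam f T E x n‖) := by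
    rw [transferM_add]
    exact_mod_cast norm_matrix_mul_le _ _
  have hpos := norm_transferM_pos lam f T E
  unfold logTransfer
  rw [← Real.log_mul (by linarith [hpos m ((T ^ n) x)]) (by linarith [hpos n x])]
  exact Real.log_le_log (by linarith [hpos (m + n) x]) (by linarith)

variable {lam f T E}

lemma exists_forall_abs_logTransfer_le {K : ℝ} (hf : ∀ t, |f t| ≤ K) (n : ℕ) :
    ∃ C, ∀ x, |logTransfer lam f T E n x| ≤ C := by
  refine ⟨Real.log (2 * (2 * (|E| + |lam| * K + 1)) ^ n), fun x => ?_⟩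
  have diagonal_le (i : ℕ) : |energyDiagonal lam f T E x i| ≤ |E| + |lam| * K := by
    refine (abs_sub _ _).trans ?_
    rw [abs_mul]
    gcongr
    exact hf _
  rw [abs_of_nonneg (logTransfer_nonneg lam f T E n x), logTransfer, transferM_eq_transferProd]
  have one_le := one_le_two_mul_norm_transferProd (energyDiagonal lam f T E x) n
  exact Real.log_le_log (by linarith) (by gcongr; exact norm_transferProd_le diagonal_le n)

lemma logTransfer_periodic (hf : f.Periodic 1) (hT : ∀ t, T (t + 1) = T t + 1) (n : ℕ) :
    (logTransfer lam f T E n).Periodic 1 := by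
  have pow_add_one (i : ℕ) (x : ℝ) : (T ^ i) (x + 1) = (T ^ i) x + 1 := by
    rw [← Equiv.Perm.iterate_eq_pow]
    exact Function.Commute.iterate_left (f := T) (g := (· + 1)) hT i x
  have diagonal_eq (x : ℝ) : energyDiagonal lam f T E (x + 1) = energyDiagonal lam f T E x := by
    funext i
    rw [energyDiagonal, energyDiagonal, pow_add_one, hf]
  intro x
  simp only [logTransfer, transferM_eq_transferProd, diagonal_eq]

lemma continuousAt_logTransfer {x : ℝ} (hT : ∀ i : ℕ, ContinuousAt (T ^ i) x)
    (hf : ∀ i : ℕ, ContinuousAt f ((T ^ i) x)) (n : ℕ) :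
    ContinuousAt (logTransfer lam f T E n) x := by
  have continuousAt_transferM : ContinuousAt (fun y => transferM lam f T E y n) x := by
    induction n with
    | zero => exact continuousAt_const
    | succ n ih =>
      refine ContinuousAt.mul (f := fun y => transferA lam f T E y n) ?_ ih
      have hfi : ContinuousAt (fun y => f ((T ^ n) y)) x := (hf n).comp (hT n)
      refine continuousAt_pi.mpr fun i => continuousAt_pi.mpr fun j => ?_
      fin_cases i <;> fin_cases j
      · exact continuousAt_const.sub (hfi.const_mul lam)
      all_goals exact continuousAt_const
  exact (continuousAt_transferM.norm.const_mul 2).log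
    (by linarith [norm_transferM_pos lam f T E n x])

end TransferNorm

/-! ### Upper envelopes -/

section UpperEnvelope

open scoped Topology

variable {X : Type*} [PseudoMetricSpace X] {g : X → ℝ} {K r : ℝ}

/-- The supremum of `g` over the open ball of radius `r` around `x`. For `r ≤ 0` the ball is empty
and the value is `0`. -/
def upperEnvelope (g : X → ℝ) (r : ℝ) (x : X) : ℝ :=
  sSup (g '' Metric.ball x r)

lemma le_upperEnvelope (hg : ∀ x, |g x| ≤ K) {x y : X} (hy : dist y x < r) :
    g y ≤ upperEnvelope g r x :=
  le_csSup ⟨K, Set.forall_mem_image.mpr fun z _ => (abs_le.mp (hg z)).2⟩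
    (Set.mem_image_of_mem g hy)

lemma upperEnvelope_le (hr : 0 < r) {x : X} {c : ℝ} (hg : ∀ y, dist y x < r → g y ≤ c) :
    upperEnvelope g r x ≤ c :=
  csSup_le ((Metric.nonempty_ball.mpr hr).image g) (Set.forall_mem_image.mpr hg)

lemma abs_upperEnvelope_le (hg : ∀ x, |g x| ≤ K) (hr : 0 < r) (x : X) :
    |upperEnvelope g r x| ≤ K :=
  abs_le.mpr ⟨(abs_le.mp (hg x)).1.trans (le_upperEnvelope hg (by rwa [dist_self])),
    upperEnvelope_le hr fun y _ => (abs_le.mp (hg y)).2⟩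

lemma lowerSemicontinuous_upperEnvelope (hg : ∀ x, |g x| ≤ K) (hr : 0 < r) :
    LowerSemicontinuous (upperEnvelope g r) := by
  intro x c hc
  obtain ⟨_, ⟨z, hz, rfl⟩, hcz⟩ :=
    exists_lt_of_lt_csSup ((Metric.nonempty_ball.mpr hr).image g) hc
  filter_upwards [Metric.isOpen_ball.mem_nhds (Metric.mem_ball_comm.mp hz)] with y hy
  exact hcz.trans_le (le_upperEnvelope hg (Metric.mem_ball_comm.mp hy))

lemma measurable_upperEnvelope [MeasurableSpace X] [OpensMeasurableSpace X]
    (hg : ∀ x, |g x| ≤ K) (r : ℝ) : Measurable (upperEnvelope g r) := by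
  rcases le_or_gt r 0 with hr | hr
  · have envelope_eq_zero : upperEnvelope g r = 0 := by
      funext x
      simp [upperEnvelope, Metric.ball_eq_empty.mpr hr]
    exact envelope_eq_zero ▸ measurable_zero
  · exact (lowerSemicontinuous_upperEnvelope hg hr).measurable

lemma upperEnvelope_periodic {V : Type*} [SeminormedAddCommGroup V] {g : V → ℝ} {c : V}
    (hg : g.Periodic c) (r : ℝ) : (upperEnvelope g r).Periodic c := by
  intro x
  have image_eq : g '' Metric.ball (x + c) r = g '' Metric.ball x r := by
    have ball_eq := (IsometryEquiv.addRight c).image_ball x r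
    rw [IsometryEquiv.addRight_apply] at ball_eq
    rw [← ball_eq, Set.image_image]
    exact Set.image_congr fun y _ => hg y
  rw [upperEnvelope, upperEnvelope, image_eq]

lemma tendsto_upperEnvelope (hg : ∀ x, |g x| ≤ K) {x : X} (hx : ContinuousAt g x) :
    Tendsto (fun r => upperEnvelope g r x) (𝓝[>] 0) (𝓝 (g x)) := by
  refine tendsto_order.mpr ⟨fun c hc => ?_, fun c hc => ?_⟩
  · filter_upwards [self_mem_nhdsWithin] with r hr
    exact hc.trans_le (le_upperEnvelope hg (by rwa [dist_self]))
  · obtain ⟨c', hgc', hc'c⟩ := exists_between hc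
    obtain ⟨ρ, hρ, ball_subset⟩ := Metric.eventually_nhds_iff.mp (hx.eventually_lt_const hgc')
    filter_upwards [Ioo_mem_nhdsGT hρ] with r hr
    exact (upperEnvelope_le hr.1 fun y hy => (ball_subset (hy.trans hr.2)).le).trans_lt hc'c

variable [MeasurableSpace X] [OpensMeasurableSpace X] {μ : Measure X}

lemma aestronglyMeasurable_of_ae_continuousAt (hg : ∀ x, |g x| ≤ K)
    (hcont : ∀ᵐ x ∂μ, ContinuousAt g x) : AEStronglyMeasurable g μ :=
  aestronglyMeasurable_of_tendsto_ae (𝓝[>] (0 : ℝ))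
    (fun r => (measurable_upperEnvelope hg r).aestronglyMeasurable)
    (hcont.mono fun _ => tendsto_upperEnvelope hg)

lemma tendsto_integral_upperEnvelope [IsFiniteMeasure μ] (hg : ∀ x, |g x| ≤ K)
    (hcont : ∀ᵐ x ∂μ, ContinuousAt g x) :
    Tendsto (fun r => ∫ x, upperEnvelope g r x ∂μ) (𝓝[>] 0) (𝓝 (∫ x, g x ∂μ)) := by
  refine tendsto_integral_filter_of_dominated_convergence (fun _ => K)
    (.of_forall fun r => (measurable_upperEnvelope hg r).aestronglyMeasurable) ?_
    (integrable_const K) (hcont.mono fun _ => tendsto_upperEnvelope hg)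
  filter_upwards [self_mem_nhdsWithin] with r hr
  exact .of_forall (abs_upperEnvelope_le hg hr)

end UpperEnvelope

/-! ### Invariant measures of circle maps -/

/-- A probability measure on the circle `ℝ/ℤ`, given as its lift `ν` to `ℝ`: a measure invariant
under `t ↦ t + 1` with mass one on the fundamental domain `[0, 1)`. -/
structure IsCircleProbability (ν : Measure ℝ) : Prop where
  measurePreserving_add_one : MeasurePreserving (· + 1) ν ν
  measure_Ico_zero_one : ν (Set.Ico 0 1) = 1

lemma isAddFundamentalDomain_preimage_Ico (S : CircleDeg1Lift) (ν : Measure ℝ) :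
    IsAddFundamentalDomain (AddSubgroup.zmultiples (1 : ℝ)) (S ⁻¹' Set.Ico 0 1) ν := by
  refine .mk' (S.monotone.measurable measurableSet_Ico).nullMeasurableSet fun x => ?_
  have zsmul_bijective : Function.Bijective
      (Set.codRestrict (fun n : ℤ => n • (1 : ℝ)) (AddSubgroup.zmultiples (1 : ℝ)) _) :=
    (Equiv.ofInjective _ (zsmul_left_strictMono one_pos).injective).bijective
  refine zsmul_bijective.existsUnique_iff.mpr ?_
  have mem_iff (n : ℤ) : n • (1 : ℝ) + x ∈ S ⁻¹' Set.Ico 0 1 ↔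
      S x + n • (1 : ℝ) ∈ Set.Ico (0 : ℝ) (0 + 1) := by
    rw [zsmul_one, Set.mem_preimage, S.map_int_add, add_comm, zero_add]
  exact (existsUnique_congr mem_iff).mpr (existsUnique_add_zsmul_mem_Ico one_pos (S x) 0)

namespace IsCircleProbability

variable {ν : Measure ℝ}

lemma measurePreserving_add_int (hν : IsCircleProbability ν) (n : ℤ) :
    MeasurePreserving (· + (n : ℝ)) ν ν := by
  have sub_one : MeasurePreserving (MeasurableEquiv.addRight (1 : ℝ)).symm ν ν :=
    MeasurePreserving.symm (MeasurableEquiv.addRight (1 : ℝ)) hν.measurePreserving_add_one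
  induction n with
  | zero => simpa using! MeasurePreserving.id ν
  | succ n ih => simpa [Function.comp_def, add_assoc] using hν.measurePreserving_add_one.comp ih
  | pred n ih => simpa [Function.comp_def, sub_eq_add_neg, add_assoc] using! sub_one.comp ih

lemma vaddInvariantMeasure (hν : IsCircleProbability ν) :
    VAddInvariantMeasure (AddSubgroup.zmultiples (1 : ℝ)) ℝ ν where
  measure_preimage_vadd := by
    rintro ⟨_, n, rfl⟩ s hs
    simpa [AddSubgroup.vadd_def, add_comm] using
      (hν.measurePreserving_add_int n).measure_preimage hs.nullMeasurableSet

lemma measure_Ioc_add_one (hν : IsCircleProbability ν) (u : ℝ) : ν (Set.Ioc u (u + 1)) = 1 := by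
  have := hν.vaddInvariantMeasure
  rw [(isAddFundamentalDomain_Ioc one_pos u ν).measure_eq
    (isAddFundamentalDomain_preimage_Ico 1 ν)]
  exact hν.measure_Ico_zero_one

lemma isProbabilityMeasure_restrict (hν : IsCircleProbability ν) :
    IsProbabilityMeasure (ν.restrict (Set.Ico 0 1)) :=
  ⟨by rw [Measure.restrict_apply_univ, hν.measure_Ico_zero_one]⟩

lemma isLocallyFiniteMeasure (hν : IsCircleProbability ν) : IsLocallyFiniteMeasure ν where
  finiteAtNhds x := ⟨Set.Ioc (x - 1 / 2) (x - 1 / 2 + 1),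
    Ioc_mem_nhds (by linarith) (by linarith), by simp [hν.measure_Ioc_add_one]⟩

lemma setIntegral_comp (hν : IsCircleProbability ν) {S : CircleDeg1Lift}
    (hS : MeasurePreserving S ν ν) {F : ℝ → ℝ} (hF : Measurable F) (hper : F.Periodic 1) :
    ∫ x in Set.Ico 0 1, F (S x) ∂ν = ∫ x in Set.Ico 0 1, F x ∂ν := by
  have := hν.vaddInvariantMeasure
  have periodic_comp : ∀ (c : AddSubgroup.zmultiples (1 : ℝ)) (x : ℝ),
      F (S (c +ᵥ x)) = F (S x) := by
    rintro ⟨_, n, rfl⟩ x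
    simpa [AddSubgroup.vadd_def, add_comm] using hper.int_mul n (S x)
  have restricted := hS.restrict_preimage (measurableSet_Ico (a := (0 : ℝ)) (b := 1))
  calc ∫ x in Set.Ico 0 1, F (S x) ∂ν = ∫ x in S ⁻¹' Set.Ico 0 1, F (S x) ∂ν :=
        (isAddFundamentalDomain_preimage_Ico 1 ν).setIntegral_eq
          (isAddFundamentalDomain_preimage_Ico S ν) periodic_comp
    _ = ∫ x in Set.Ico 0 1, F x ∂ν := by
        rw [← restricted.map_eq, integral_map restricted.aemeasurable hF.aestronglyMeasurable]

end IsCircleProbability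

/-! ### Semiconjugacy to a translation -/

section Semiconjugacy

variable {ν : Measure ℝ}

/-- The distribution function `x ↦ ν (0, x]` (with a sign for `x < 0`) of a circle probability
measure, as a lift of a degree one circle map. -/
def circleCDF (hν : IsCircleProbability ν) : CircleDeg1Lift where
  toFun x := ∫ _ in 0..x, (1 : ℝ) ∂ν
  monotone' := by
    have := hν.isLocallyFiniteMeasure
    intro x y hxy
    rw [← sub_nonneg, intervalIntegral.integral_interval_sub_left intervalIntegrable_const
      intervalIntegrable_const]
    exact intervalIntegral.integral_nonneg hxy fun _ _ => zero_le_one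
  map_add_one' x := by
    have := hν.isLocallyFiniteMeasure
    rw [← intervalIntegral.integral_add_adjacent_intervals (b := x) intervalIntegrable_const
      intervalIntegrable_const, intervalIntegral.integral_of_le (by linarith : x ≤ x + 1)]
    simp [hν.measure_Ioc_add_one, measureReal_def]

lemma circleCDF_sub (hν : IsCircleProbability ν) {x y : ℝ} (hxy : x ≤ y) :
    circleCDF hν y - circleCDF hν x = ν.real (Set.Ioc x y) := by
  have := hν.isLocallyFiniteMeasure
  change (∫ _ in 0..y, (1 : ℝ) ∂ν) - ∫ _ in 0..x, (1 : ℝ) ∂ν = _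
  rw [intervalIntegral.integral_interval_sub_left intervalIntegrable_const
    intervalIntegrable_const, intervalIntegral.integral_of_le hxy]
  simp

lemma circleCDF_strictMono [ν.IsOpenPosMeasure] (hν : IsCircleProbability ν) :
    StrictMono (circleCDF hν) := by
  have := hν.isLocallyFiniteMeasure
  intro x y hxy
  rw [← sub_pos, circleCDF_sub hν hxy.le]
  refine ENNReal.toReal_pos (ne_of_gt ?_) measure_Ioc_lt_top.ne
  exact ((Measure.measure_Ioo_pos ν).mpr hxy).trans_le (measure_mono Set.Ioo_subset_Ioc_self)

lemma circleCDF_apply (hν : IsCircleProbability ν) {S : CircleDeg1Lift} (hS : StrictMono S)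
    (hνS : MeasurePreserving S ν ν) (x : ℝ) :
    circleCDF hν (S x) = circleCDF hν x + S.translationNumber := by
  have increment_eq {u v : ℝ} (huv : u ≤ v) :
      circleCDF hν (S v) - circleCDF hν (S u) = circleCDF hν v - circleCDF hν u := by
    have preimage_eq : S ⁻¹' Set.Ioc (S u) (S v) = Set.Ioc u v := by
      ext t
      simp [hS.lt_iff_lt, hS.le_iff_le]
    rw [circleCDF_sub hν huv, circleCDF_sub hν (S.monotone huv), ← preimage_eq, measureReal_def,
      measureReal_def, hνS.measure_preimage measurableSet_Ioc.nullMeasurableSet]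
  set c := circleCDF hν (S 0) - circleCDF hν 0
  have apply_eq (y : ℝ) : circleCDF hν (S y) = c + circleCDF hν y := by
    rcases le_total 0 y with hy | hy <;> linarith [increment_eq hy]
  have semiconj : Function.Semiconj (circleCDF hν) S
      (CircleDeg1Lift.translate (Multiplicative.ofAdd c)) := apply_eq
  rw [CircleDeg1Lift.translationNumber_eq_of_semiconj semiconj,
    CircleDeg1Lift.translationNumber_translate, apply_eq, add_comm]

lemma exists_pos_forall_map_add_sub_map_ge {h : CircleDeg1Lift} (hh : StrictMono h) {r : ℝ}
    (hr : 0 < r) : ∃ κ > 0, ∀ x, κ ≤ h (x + r) - h (x - r) := by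
  have on_unit_interval : ∃ κ > 0, ∀ x ∈ Set.Icc (0 : ℝ) 1, κ ≤ h (x + r) - h (x - r) := by
    refine isCompact_Icc.induction_on ⟨1, one_pos, by simp⟩ ?_ ?_ fun x _ => ?_
    · exact fun s t hst ⟨κ, hκ, ht⟩ => ⟨κ, hκ, fun x hx => ht x (hst hx)⟩
    · rintro s t ⟨κ₁, hκ₁, hs⟩ ⟨κ₂, hκ₂, ht⟩
      refine ⟨min κ₁ κ₂, lt_min hκ₁ hκ₂, fun x hx => ?_⟩
      exact hx.elim (fun hx => (min_le_left _ _).trans (hs x hx))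
        fun hx => (min_le_right _ _).trans (ht x hx)
    · refine ⟨Set.Ioo (x - r / 2) (x + r / 2),
        mem_nhdsWithin_of_mem_nhds (Ioo_mem_nhds (by linarith) (by linarith)),
        h (x + r / 2) - h (x - r / 2), sub_pos.mpr (hh (by linarith)), fun y hy => ?_⟩
      exact sub_le_sub (h.monotone (by linarith [hy.1])) (h.monotone (by linarith [hy.2]))
  obtain ⟨κ, hκ, hκ_le⟩ := on_unit_interval
  refine ⟨κ, hκ, fun x => ?_⟩
  have at_fract := hκ_le (Int.fract x) ⟨Int.fract_nonneg x, (Int.fract_lt_one x).le⟩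
  rw [Int.fract, sub_add_eq_add_sub, sub_right_comm, h.map_sub_int, h.map_sub_int] at at_fract
  linarith

lemma exists_pos_forall_abs_sub_lt_of_abs_map_sub_lt {h : CircleDeg1Lift} (hh : StrictMono h)
    {r : ℝ} (hr : 0 < r) : ∃ κ > 0, ∀ u v, |h u - h v| < κ → |u - v| < r := by
  obtain ⟨κ, hκ, hκ_le⟩ := exists_pos_forall_map_add_sub_map_ge hh (half_pos hr)
  refine ⟨κ, hκ, fun u v huv => ?_⟩
  have increment_lt {a b : ℝ} (hab : a + r ≤ b) : κ ≤ h b - h a := by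
    have monotone_step := h.monotone (by linarith : a + r / 2 + r / 2 ≤ b)
    have at_midpoint := hκ_le (a + r / 2)
    rw [add_sub_cancel_right] at at_midpoint
    linarith
  by_contra! hge
  rcases le_abs.mp hge with h_le | h_le
  · linarith [increment_lt (by linarith : v + r ≤ u), le_abs_self (h u - h v)]
  · linarith [increment_lt (by linarith : u + r ≤ v), neg_le_abs (h u - h v)]

end Semiconjugacy

/-! ### Birkhoff sums over circle homeomorphisms -/

section BirkhoffSum

lemma exists_nat_forall_exists_abs_add_mul_sub_lt {β : ℝ} (hβ : Irrational β) {κ : ℝ}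
    (hκ : 0 < κ) : ∃ M : ℕ, ∀ θ : ℝ, ∃ k ≤ M, ∃ l : ℤ, |θ + k * β - l| < κ := by
  have dense : DenseRange fun k : ℕ => k • (β : UnitAddCircle) := by
    rw [← denseRange_zsmul_iff_nsmul]
    exact AddCircle.denseRange_zsmul_coe_iff.mpr (by simpa using hβ)
  let U (M : ℕ) : Set UnitAddCircle := ⋃ k ≤ M, {θ | ‖θ + k • (β : UnitAddCircle)‖ < κ}
  have U_open (M : ℕ) : IsOpen (U M) :=
    isOpen_biUnion fun k _ => isOpen_lt (by fun_prop) continuous_const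
  have U_cover : Set.univ ⊆ ⋃ M, U M := fun θ _ => by
    obtain ⟨k, hk⟩ := dense.exists_dist_lt (-θ) hκ
    rw [dist_eq_norm, ← norm_neg, neg_sub, sub_neg_eq_add, add_comm] at hk
    exact Set.mem_iUnion.mpr ⟨k, Set.mem_iUnion₂.mpr ⟨k, le_rfl, hk⟩⟩
  have U_monotone : Monotone U := fun _ _ hMN =>
    Set.biUnion_subset_biUnion_left fun _ hk => le_trans hk hMN
  obtain ⟨M, hM⟩ := isCompact_univ.elim_directed_cover U U_open U_cover U_monotone.directed_le
  refine ⟨M, fun θ => ?_⟩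
  obtain ⟨k, hk, hθ⟩ := Set.mem_iUnion₂.mp (hM (Set.mem_univ (θ : UnitAddCircle)))
  rw [Set.mem_ofPred_eq, ← AddCircle.coe_nsmul, ← AddCircle.coe_add, UnitAddCircle.norm_eq,
    nsmul_eq_mul] at hθ
  exact ⟨k, hk, _, hθ⟩

lemma abs_birkhoffSum_iterate_sub_le {X : Type*} (S : X → X) {g : X → ℝ} {K : ℝ}
    (hg : ∀ x, |g x| ≤ K) (n k : ℕ) (x : X) :
    |birkhoffSum S g n (S^[k] x) - birkhoffSum S g n x| ≤ 2 * K * k := by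
  induction k with
  | zero => simp
  | succ k ih =>
    have one_step : |birkhoffSum S g n (S^[k + 1] x) - birkhoffSum S g n (S^[k] x)| ≤ 2 * K := by
      rw [Function.iterate_succ_apply', birkhoffSum_apply_sub_birkhoffSum]
      exact (abs_sub _ _).trans (by linarith [hg (S^[n] (S^[k] x)), hg (S^[k] x)])
    push_cast
    linarith [abs_sub_le (birkhoffSum S g n (S^[k + 1] x)) (birkhoffSum S g n (S^[k] x))
      (birkhoffSum S g n x)]

variable {h S : CircleDeg1Lift} {g : ℝ → ℝ} {K : ℝ}

lemma map_iterate_eq_add_mul {β : ℝ} (hS : ∀ x, h (S x) = h x + β) (i : ℕ) (x : ℝ) :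
    h (S^[i] x) = h x + i * β := by
  induction i with
  | zero => simp
  | succ i ih =>
    rw [Function.iterate_succ_apply', hS, ih]
    push_cast
    ring

lemma exists_forall_birkhoffSum_le_birkhoffSum_upperEnvelope {β : ℝ} (hh : StrictMono h)
    (hβ : Irrational β) (hS : ∀ x, h (S x) = h x + β) (hper : g.Periodic 1)
    (hg : ∀ x, |g x| ≤ K) {r : ℝ} (hr : 0 < r) :
    ∃ C, ∀ n x y, birkhoffSum S g n x ≤ birkhoffSum S (upperEnvelope g r) n y + C := by
  obtain ⟨κ, hκ, abs_sub_lt⟩ := exists_pos_forall_abs_sub_lt_of_abs_map_sub_lt hh hr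
  obtain ⟨M, hM⟩ := exists_nat_forall_exists_abs_add_mul_sub_lt hβ hκ
  have hK : 0 ≤ K := (abs_nonneg _).trans (hg 0)
  refine ⟨2 * K * M, fun n x y => ?_⟩
  obtain ⟨k, hk, l, hkl⟩ := hM (h x - h y)
  have shadowing (i : ℕ) : g (S^[i] (S^[k] x)) ≤ upperEnvelope g r (S^[i] y) := by
    have close : |S^[i] (S^[k] x) - (S^[i] y + l)| < r := by
      apply abs_sub_lt
      rw [h.map_add_int]
      simp only [map_iterate_eq_add_mul hS]
      convert hkl using 2
      ring
    rw [← (upperEnvelope_periodic hper r).int_mul l, mul_one]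
    exact le_upperEnvelope hg close
  calc birkhoffSum S g n x ≤ birkhoffSum S g n (S^[k] x) + 2 * K * k := by
        linarith [(abs_le.mp (abs_birkhoffSum_iterate_sub_le S hg n k x)).1]
    _ ≤ birkhoffSum S (upperEnvelope g r) n y + 2 * K * M := by
        gcongr
        exact Finset.sum_le_sum fun i _ => shadowing i

variable {ν : Measure ℝ}

lemma setIntegral_birkhoffSum (hν : IsCircleProbability ν) (hνS : MeasurePreserving S ν ν)
    (hmeas : Measurable g) (hper : g.Periodic 1) (hg : ∀ x, |g x| ≤ K) (n : ℕ) :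
    ∫ x in Set.Ico 0 1, birkhoffSum S g n x ∂ν = n * ∫ x in Set.Ico 0 1, g x ∂ν := by
  have := hν.isProbabilityMeasure_restrict
  have integral_iterate (i : ℕ) :
      ∫ x in Set.Ico 0 1, g (S^[i] x) ∂ν = ∫ x in Set.Ico 0 1, g x ∂ν := by
    rw [← CircleDeg1Lift.coe_pow]
    exact hν.setIntegral_comp (by rw [CircleDeg1Lift.coe_pow]; exact hνS.iterate i) hmeas hper
  have integrable_iterate (i : ℕ) : IntegrableOn (fun x => g (S^[i] x)) (Set.Ico 0 1) ν :=
    Integrable.of_bound (hmeas.comp (hνS.measurable.iterate i)).aestronglyMeasurable K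
      (.of_forall fun x => hg _)
  simp only [birkhoffSum]
  rw [integral_finsetSum _ fun i _ => integrable_iterate i]
  simp [integral_iterate]

lemma exists_forall_birkhoffSum_le [ν.IsOpenPosMeasure] (hν : IsCircleProbability ν)
    (hSmono : StrictMono S) (hνS : MeasurePreserving S ν ν)
    (hirr : Irrational S.translationNumber) (hper : g.Periodic 1) (hg : ∀ x, |g x| ≤ K)
    (hcont : ∀ᵐ x ∂ν, ContinuousAt g x) {ε : ℝ} (hε : 0 < ε) :
    ∃ C, ∀ n x, birkhoffSum S g n x ≤ n * (∫ t in Set.Ico 0 1, g t ∂ν + ε) + C := by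
  have := hν.isProbabilityMeasure_restrict
  obtain ⟨r, envelope_lt, hr⟩ := ((tendsto_integral_upperEnvelope hg
    (ae_restrict_of_ae (s := Set.Ico 0 1) hcont)).eventually_lt_const
      (lt_add_of_pos_right _ hε) |>.and self_mem_nhdsWithin).exists
  obtain ⟨C, hC⟩ := exists_forall_birkhoffSum_le_birkhoffSum_upperEnvelope
    (circleCDF_strictMono hν) hirr (circleCDF_apply hν hSmono hνS) hper hg hr
  refine ⟨C, fun n x => ?_⟩
  have envelope_measurable := measurable_upperEnvelope hg r
  have sum_integrable : IntegrableOn (birkhoffSum S (upperEnvelope g r) n) (Set.Ico 0 1) ν :=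
    integrable_finsetSum _ fun i _ => Integrable.of_bound
      (envelope_measurable.comp (hνS.measurable.iterate i)).aestronglyMeasurable K
      (.of_forall fun y => abs_upperEnvelope_le hg hr _)
  have averaged : birkhoffSum S g n x - C ≤ n * ∫ t in Set.Ico 0 1, upperEnvelope g r t ∂ν :=
    calc birkhoffSum S g n x - C = ∫ _ in Set.Ico 0 1, (birkhoffSum S g n x - C) ∂ν := by simp
      _ ≤ ∫ y in Set.Ico 0 1, birkhoffSum S (upperEnvelope g r) n y ∂ν :=
          integral_mono (integrable_const _) sum_integrable fun y => by linarith [hC n x y]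
      _ = n * ∫ t in Set.Ico 0 1, upperEnvelope g r t ∂ν :=
          setIntegral_birkhoffSum hν hνS envelope_measurable (upperEnvelope_periodic hper r)
            (abs_upperEnvelope_le hg hr) n
  have := mul_le_mul_of_nonneg_left envelope_lt.le n.cast_nonneg
  linarith

end BirkhoffSum

/-! ### Subadditive cocycles over circle homeomorphisms -/

section SubadditiveCocycle

lemma subadditive_le_add_birkhoffSum {X : Type*} {S : X → X} {φ : ℕ → X → ℝ}
    (hφ : ∀ m n x, φ (m + n) x ≤ φ m (S^[n] x) + φ n x) (r N s : ℕ) (x : X) :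
    φ (r + N * s) x ≤ φ r (S^[N * s] x) + birkhoffSum S^[N] (φ N) s x := by
  induction s generalizing r with
  | zero => simp
  | succ s ih =>
    have split_block := hφ r N (S^[N * s] x)
    rw [← Function.iterate_add_apply] at split_block
    rw [birkhoffSum_succ, ← Function.iterate_mul, Nat.mul_succ, add_comm (N * s), ← add_assoc]
    linarith [ih (r + N)]

lemma exists_forall_subadditive_le_mul_add {X : Type*} {S : X → X} {φ : ℕ → X → ℝ} {c C : ℝ}
    {N : ℕ} (hφ : ∀ m n x, φ (m + n) x ≤ φ m (S^[n] x) + φ n x)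
    (hbdd : ∀ n, ∃ K, ∀ x, φ n x ≤ K) (hN : N ≠ 0)
    (hblock : ∀ s x, birkhoffSum S^[N] (φ N) s x ≤ s * (N * c) + C) :
    ∃ D, ∀ n x, φ n x ≤ n * c + D := by
  choose K hK using hbdd
  refine ⟨∑ r ∈ Finset.range N, |K r| + N * |c| + C, fun n x => ?_⟩
  have hr := Nat.mod_lt n (Nat.pos_of_ne_zero hN)
  have remainder_le : K (n % N) ≤ ∑ r ∈ Finset.range N, |K r| := (le_abs_self _).trans
    (Finset.single_le_sum (fun r _ => abs_nonneg (K r)) (Finset.mem_range.mpr hr))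
  have length_correction : -((n % N : ℕ) * c) ≤ N * |c| := by
    calc -((n % N : ℕ) * c) ≤ (n % N : ℕ) * |c| := by
          rw [← mul_neg]
          gcongr
          exact neg_le_abs c
      _ ≤ N * |c| := by gcongr
  have decomposed := subadditive_le_add_birkhoffSum hφ (n % N) N (n / N) x
  rw [Nat.mod_add_div] at decomposed
  have length_eq : (n : ℝ) = (n % N : ℕ) + N * (n / N : ℕ) := by
    exact_mod_cast (Nat.mod_add_div n N).symm
  calc φ n x ≤ K (n % N) + ((n / N : ℕ) * (N * c) + C) :=
        decomposed.trans (add_le_add (hK _ _) (hblock _ _))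
    _ = n * c + (K (n % N) + -((n % N : ℕ) * c) + C) := by rw [length_eq]; ring
    _ ≤ n * c + (∑ r ∈ Finset.range N, |K r| + N * |c| + C) := by gcongr

variable {ν : Measure ℝ} {S : CircleDeg1Lift} {φ : ℕ → ℝ → ℝ} {L : ℝ}

lemma exists_forall_birkhoffSum_iterate_le [ν.IsOpenPosMeasure] (hν : IsCircleProbability ν)
    (hSmono : StrictMono S) (hνS : MeasurePreserving S ν ν)
    (hirr : Irrational S.translationNumber) {N : ℕ} (hN : N ≠ 0) {g : ℝ → ℝ} {K : ℝ}
    (hper : g.Periodic 1) (hg : ∀ x, |g x| ≤ K)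
    (hcont : ∀ᵐ x ∂ν, ContinuousAt g x) {ε : ℝ} (hε : 0 < ε) :
    ∃ C, ∀ n x, birkhoffSum S^[N] g n x ≤ n * (∫ t in Set.Ico 0 1, g t ∂ν + ε) + C := by
  rw [← CircleDeg1Lift.coe_pow]
  refine exists_forall_birkhoffSum_le hν ?_ ?_ ?_ hper hg hcont hε
  · simpa only [CircleDeg1Lift.coe_pow] using hSmono.iterate N
  · simpa only [CircleDeg1Lift.coe_pow] using hνS.iterate N
  · simpa only [CircleDeg1Lift.translationNumber_pow] using hirr.natCast_mul hN

theorem eventually_forall_subadditive_le [ν.IsOpenPosMeasure] (hν : IsCircleProbability ν)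
    (hSmono : StrictMono S) (hνS : MeasurePreserving S ν ν)
    (hirr : Irrational S.translationNumber)
    (hsub : ∀ m n x, φ (m + n) x ≤ φ m (S^[n] x) + φ n x) (hper : ∀ n, (φ n).Periodic 1)
    (hbdd : ∀ n, ∃ K, ∀ x, |φ n x| ≤ K) (hcont : ∀ n, ∀ᵐ x ∂ν, ContinuousAt (φ n) x)
    (hlim : Tendsto (fun n : ℕ => (1 / (n : ℝ)) * ∫ x in Set.Ico 0 1, φ n x ∂ν) atTop (nhds L))
    {ε : ℝ} (hε : 0 < ε) : ∀ᶠ n : ℕ in atTop, ∀ x, φ n x ≤ n * (L + ε) := by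
  obtain ⟨N, average_lt, hN⟩ := ((hlim.eventually_lt_const (by linarith : L < L + ε / 3)).and
    (eventually_ne_atTop 0)).exists
  have integral_le : ∫ x in Set.Ico 0 1, φ N x ∂ν ≤ N * (L + ε / 3) := by
    rw [one_div_mul_eq_div, div_lt_iff₀' (by positivity)] at average_lt
    exact average_lt.le
  obtain ⟨K, hK⟩ := hbdd N
  obtain ⟨C, hC⟩ := exists_forall_birkhoffSum_iterate_le hν hSmono hνS hirr hN (hper N) hK
    (hcont N) (by positivity : 0 < N * (ε / 3))
  have block_le (s : ℕ) (x : ℝ) :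
      birkhoffSum S^[N] (φ N) s x ≤ s * (N * (L + 2 * ε / 3)) + C := by
    refine (hC s x).trans ?_
    gcongr
    linarith
  obtain ⟨D, hD⟩ := exists_forall_subadditive_le_mul_add hsub
    (fun n => (hbdd n).imp fun _ h x => (le_abs_self _).trans (h x)) hN block_le
  filter_upwards [(tendsto_natCast_atTop_atTop.atTop_mul_const
    (by positivity : 0 < ε / 3)).eventually_ge_atTop D] with n hn x
  linarith [hD n x]

end SubadditiveCocycle

/-! ### Uniform upper bound by the Lyapunov exponent -/

section Lyapunov

/-- An order-preserving bijection of `ℝ` commuting with `t ↦ t + 1`, i.e. a lift of an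
orientation-preserving circle homeomorphism, as a lift of a degree one circle map. -/
def permLift (T : Equiv.Perm ℝ) (hTmono : StrictMono T) (hTper : ∀ t, T (t + 1) = T t + 1) :
    CircleDeg1Lift :=
  ⟨⟨T, hTmono.monotone⟩, hTper⟩

variable {lam : ℝ} {f : ℝ → ℝ} {T : Equiv.Perm ℝ} {E K L : ℝ} {ν : Measure ℝ}

lemma translationNumber_permLift (hTmono : StrictMono T) (hTper : ∀ t, T (t + 1) = T t + 1)
    {α : ℝ} (hrot : Tendsto (fun m : ℕ => (T ^ m) 0 / (m : ℝ)) atTop (nhds α)) :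
    (permLift T hTmono hTper).translationNumber = α := by
  refine CircleDeg1Lift.translationNumber_eq_of_tendsto₀ _ (hrot.congr fun m => ?_)
  rw [← Equiv.Perm.iterate_eq_pow]
  rfl

lemma ae_continuousAt_logTransfer (hTcont : Continuous T) (hνT : MeasurePreserving T ν ν)
    (hf : ∀ᵐ x ∂ν, ContinuousAt f x) (n : ℕ) :
    ∀ᵐ x ∂ν, ContinuousAt (logTransfer lam f T E n) x := by
  have f_continuousAt_orbit : ∀ᵐ x ∂ν, ∀ i : ℕ, ContinuousAt f ((T ^ i) x) :=
    ae_all_iff.mpr fun i => by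
      rw [← Equiv.Perm.iterate_eq_pow]
      exact (hνT.iterate i).quasiMeasurePreserving.ae hf
  filter_upwards [f_continuousAt_orbit] with x hx
  refine continuousAt_logTransfer (fun i => ?_) hx n
  rw [← Equiv.Perm.iterate_eq_pow]
  exact (hTcont.iterate i).continuousAt

lemma tendsto_average_logTransfer (hν : IsCircleProbability ν) (hf : ∀ t, |f t| ≤ K)
    (hcont : ∀ n, ∀ᵐ x ∂ν, ContinuousAt (logTransfer lam f T E n) x)
    (hLya : Tendsto (fun n : ℕ => (1 / (n : ℝ)) *
      ∫ x in Set.Ico 0 1, Real.log ‖transferM lam f T E x n‖ ∂ν) atTop (nhds L)) :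
    Tendsto (fun n : ℕ => (1 / (n : ℝ)) * ∫ x in Set.Ico 0 1, logTransfer lam f T E n x ∂ν)
      atTop (nhds L) := by
  have := hν.isProbabilityMeasure_restrict
  have integrable (n : ℕ) : IntegrableOn (logTransfer lam f T E n) (Set.Ico 0 1) ν := by
    obtain ⟨C, hC⟩ := exists_forall_abs_logTransfer_le (lam := lam) (T := T) (E := E) hf n
    have measurable := aestronglyMeasurable_of_ae_continuousAt hC
      (ae_restrict_of_ae (s := Set.Ico 0 1) (hcont n))
    exact Integrable.of_bound measurable C (.of_forall hC)
  have integral_eq (n : ℕ) : ∫ x in Set.Ico 0 1, logTransfer lam f T E n x ∂ν =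
      Real.log 2 + ∫ x in Set.Ico 0 1, Real.log ‖transferM lam f T E x n‖ ∂ν := by
    have log_norm_eq (x : ℝ) : Real.log ‖transferM lam f T E x n‖ =
        logTransfer lam f T E n x - Real.log 2 := by rw [logTransfer_eq, add_sub_cancel_left]
    simp only [log_norm_eq]
    rw [integral_sub (integrable n) (integrable_const _)]
    simp
  simp only [integral_eq, mul_add]
  simpa using (tendsto_one_div_atTop_nhds_zero_nat.mul_const (Real.log 2)).add hLya

theorem eventually_forall_norm_transferM_le [ν.IsOpenPosMeasure] (hν : IsCircleProbability ν)
    (hfper : f.Periodic 1) (hf : ∀ t, |f t| ≤ K) (hTmono : StrictMono T)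
    (hTper : ∀ t, T (t + 1) = T t + 1) (hνT : MeasurePreserving T ν ν)
    (hirr : Irrational (permLift T hTmono hTper).translationNumber)
    (hcont : ∀ n, ∀ᵐ x ∂ν, ContinuousAt (logTransfer lam f T E n) x)
    (hlim : Tendsto (fun n : ℕ => (1 / (n : ℝ)) *
      ∫ x in Set.Ico 0 1, logTransfer lam f T E n x ∂ν) atTop (nhds L)) {ε : ℝ} (hε : 0 < ε) :
    ∀ᶠ n : ℕ in atTop, ∀ x, ‖transferM lam f T E x n‖ ≤ Real.exp (n * (L + ε)) := by
  have subadditive (m n : ℕ) (x : ℝ) : logTransfer lam f T E (m + n) x ≤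
      logTransfer lam f T E m ((permLift T hTmono hTper)^[n] x) + logTransfer lam f T E n x := by
    have := logTransfer_add_le lam f T E m n x
    rwa [← Equiv.Perm.iterate_eq_pow] at this
  filter_upwards [eventually_forall_subadditive_le hν hTmono hνT hirr subadditive
    (logTransfer_periodic hfper hTper) (exists_forall_abs_logTransfer_le hf) hcont hlim hε]
    with n hn x
  exact (norm_transferM_le_exp_logTransfer lam f T E n x).trans (Real.exp_le_exp.mpr (hn x))

end Lyapunov

/-! ### Singular points -/

section Singular

lemma le_exp_of_mul_eq {P G N b s t : ℝ} (hPG : P * G = N) (hN : N ≤ Real.exp s)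
    (hP : Real.exp b < P) (hst : s - b ≤ t) : G ≤ Real.exp t := by
  refine le_of_mul_le_mul_left ?_ ((Real.exp_pos b).trans hP)
  calc P * G ≤ Real.exp s := hPG.trans_le hN
    _ ≤ Real.exp b * Real.exp t := by
        rw [← Real.exp_add]
        exact Real.exp_le_exp.mpr (by linarith)
    _ ≤ P * Real.exp t := by gcongr

lemma block_exponent_sub_le {L δ l d q : ℝ} (hL : 0 ≤ L) (hδ : 0 ≤ δ) (hq : l + d ≤ q)
    (hd : l / 20 + q / 10 ≤ d) : l * (L + δ / 20) - q * (L - δ / 10) ≤ -(L - δ) * d := by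
  linarith [mul_le_mul_of_nonneg_left hq hL, mul_le_mul_of_nonneg_left hd hδ]

variable {lam : ℝ} {f : ℝ → ℝ} {T : Equiv.Perm ℝ} {E L δ : ℝ}

lemma half_succ_le_card_window (q : ℕ) :
    ((q : ℝ) + 1) / 2 ≤ ((3 * q / 4 - q / 4 + 1 : ℕ) : ℝ) := by
  rw [div_le_iff₀ two_pos]
  exact_mod_cast (by omega : q + 1 ≤ (3 * q / 4 - q / 4 + 1) * 2)

lemma card_window_le_half_add_three (q : ℕ) :
    ((3 * q / 4 - q / 4 + 1 : ℕ) : ℝ) ≤ ((q : ℝ) + 3) / 2 := by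
  rw [le_div_iff₀ two_pos]
  exact_mod_cast (by omega : (3 * q / 4 - q / 4 + 1) * 2 ≤ q + 3)

lemma regularPt_of_exp_lt_abs_Pdet {n₀ m : ℕ} (hL : 0 ≤ L) (hδ : 0 < δ)
    (hM : ∀ n ≥ n₀, ∀ x, ‖transferM lam f T E x n‖ ≤ Real.exp (n * (L + δ / 20)))
    (hm : 4 * n₀ + 27 ≤ m) {x : ℝ} {a : ℤ} {i : ℕ} (hi₁ : (m + 1) / 4 ≤ i)
    (hi₂ : i ≤ 3 * (m + 1) / 4)
    (hP : Real.exp ((m + 1 : ℕ) * (L - δ / 10)) < |Pdet lam f T ((T ^ a) x) E (m + 1)|) :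
    RegularPt lam f T x E (L - δ) (m + 1) (a + i) := by
  have Pdet_ne_zero := abs_pos.mp ((Real.exp_pos _).trans hP)
  have minor_le (n : ℕ) (hn : n₀ ≤ n) (y : ℝ) :
      |Pdet lam f T y E n| ≤ Real.exp (n * (L + δ / 20)) :=
    (abs_Pdet_le_norm_transferM lam f T E y n).trans (hM n hn y)
  let i' : Fin (m + 1) := ⟨i, by omega⟩
  have m_le : (m : ℝ) ≤ 4 * i + 2 := by exact_mod_cast (by omega : m ≤ 4 * i + 2)
  have le_m : 4 * (i : ℝ) ≤ 3 * (m + 1) := by exact_mod_cast (by omega : 4 * i ≤ 3 * (m + 1))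
  have m_large : (27 : ℝ) ≤ m := by exact_mod_cast (by omega : 27 ≤ m)
  have cast_sub : ((m - i : ℕ) : ℝ) = m - i := Nat.cast_sub (by omega)
  refine ⟨a, 0, i', Fin.last m, rfl, by simp, rfl, ?_, ?_, ?_, ?_⟩
  · push_cast
    linarith
  · push_cast [Fin.val_last]
    linarith
  · exact le_exp_of_mul_eq (abs_Pdet_mul_abs_GBox_zero Pdet_ne_zero i')
      (minor_le (m - i) (by omega) _) hP
      (block_exponent_sub_le hL hδ.le (by push_cast [cast_sub]; linarith)
        (by push_cast [cast_sub]; linarith))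
  · exact le_exp_of_mul_eq (abs_Pdet_mul_abs_GBox_last Pdet_ne_zero i')
      (minor_le i (by omega) _) hP
      (block_exponent_sub_le hL hδ.le (by push_cast [Fin.val_last]; linarith)
        (by push_cast [Fin.val_last]; linarith))

theorem singular_implies_large_deviation_general {ν : Measure ℝ} [ν.IsOpenPosMeasure]
    (hν : IsCircleProbability ν) (hfper : f.Periodic 1) {K : ℝ} (hf : ∀ t, |f t| ≤ K)
    (hfcont : ∀ᵐ t ∂ν, ContinuousAt f t) (hTmono : StrictMono T)
    (hTper : ∀ t, T (t + 1) = T t + 1) (hνT : MeasurePreserving T ν ν) {α : ℝ}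
    (hα : Irrational α) (hrot : Tendsto (fun m : ℕ => (T ^ m) 0 / (m : ℝ)) atTop (nhds α))
    (hLya : Tendsto (fun m : ℕ => (1 / (m : ℝ)) *
      ∫ x in Set.Ico 0 1, Real.log ‖transferM lam f T E x m‖ ∂ν) atTop (nhds L))
    {q : ℕ → ℕ} (hq : Tendsto q atTop atTop) (hδ : 0 < δ) :
    (∀ k : ℕ, ((q k : ℝ) + 1) / 2 ≤ ((3 * q k / 4 - q k / 4 + 1 : ℕ) : ℝ) ∧
      ((3 * q k / 4 - q k / 4 + 1 : ℕ) : ℝ) ≤ ((q k : ℝ) + 3) / 2) ∧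
    ∃ k0 : ℕ, ∀ k : ℕ, k0 ≤ k → ∀ x : ℝ, ∀ n : ℤ,
      ¬ RegularPt lam f T x E (L - δ) (q k) n →
      ∀ a : ℤ, n - ((3 * q k / 4 : ℕ) : ℤ) ≤ a → a ≤ n - ((q k / 4 : ℕ) : ℤ) →
        |Pdet lam f T ((T ^ a) x) E (q k)| ≤ Real.exp ((q k : ℝ) * (L - δ / 10)) := by
  refine ⟨fun k => ⟨half_succ_le_card_window _, card_window_le_half_add_three _⟩, ?_⟩
  have hTcont : Continuous T := hTmono.monotone.continuous_of_surjective T.surjective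
  have logTransfer_continuousAt :=
    ae_continuousAt_logTransfer (lam := lam) (E := E) hTcont hνT hfcont
  have logTransfer_average := tendsto_average_logTransfer hν hf logTransfer_continuousAt hLya
  have hL : 0 ≤ L := ge_of_tendsto' logTransfer_average fun n =>
    mul_nonneg (by positivity) (integral_nonneg fun x => logTransfer_nonneg lam f T E n x)
  obtain ⟨n₀, hn₀⟩ := eventually_atTop.mp <| eventually_forall_norm_transferM_le hν hfper hf hTmono
    hTper hνT (by rwa [translationNumber_permLift hTmono hTper hrot]) logTransfer_continuousAt
    logTransfer_average (by positivity : 0 < δ / 20)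
  obtain ⟨k₀, hk₀⟩ := eventually_atTop.mp (hq.eventually_ge_atTop (4 * n₀ + 28))
  refine ⟨k₀, fun k hk x n hsing a ha₁ ha₂ => not_lt.mp fun hP => hsing ?_⟩
  have hqk := hk₀ k hk
  obtain ⟨m, hm⟩ : ∃ m, q k = m + 1 := ⟨q k - 1, by omega⟩
  obtain ⟨i, hi⟩ : ∃ i : ℕ, n = a + i := ⟨(n - a).toNat, by omega⟩
  rw [hm] at hP ha₁ ha₂ hqk ⊢
  rw [hi]
  exact regularPt_of_exp_lt_abs_Pdet hL hδ hn₀ (by omega) (by omega) (by omega) hP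

end Singular

/-! ### Monotone potentials and denominators of convergents -/

section Specialization

lemma lipschitzOnWith_of_forall_lt {f : ℝ → ℝ} {s : Set ℝ} {C : ℝ} (hC : 0 ≤ C)
    (hf : ∀ u ∈ s, ∀ v ∈ s, u < v → |f v - f u| ≤ C * (v - u)) :
    LipschitzOnWith C.toNNReal f s := by
  refine LipschitzOnWith.of_dist_le_mul fun u hu v hv => ?_
  rw [Real.coe_toNNReal C hC]
  rcases lt_trichotomy u v with huv | rfl | hvu
  · rw [dist_comm, dist_comm u, Real.dist_eq, Real.dist_eq, abs_of_pos (sub_pos.mpr huv)]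
    exact hf u hu v hv huv
  · simp
  · rw [Real.dist_eq, Real.dist_eq, abs_of_pos (sub_pos.mpr hvu)]
    exact hf v hv u hu hvu

variable {f : ℝ → ℝ}

lemma exists_forall_abs_le_of_periodic {C : NNReal} (hper : f.Periodic 1)
    (hf : LipschitzOnWith C f (Set.Ico 0 1)) : ∃ K, ∀ t, |f t| ≤ K := by
  refine ⟨|f 0| + C, fun t => ?_⟩
  obtain ⟨s, hs, hst⟩ := hper.exists_mem_Ico₀ one_pos t
  have increment_le := hf.dist_le_mul s hs 0 ⟨le_rfl, one_pos⟩
  rw [Real.dist_eq, Real.dist_eq, sub_zero, abs_of_nonneg hs.1] at increment_le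
  rw [hst]
  linarith [abs_sub_abs_le_abs_sub (f s) (f 0), mul_le_of_le_one_right C.coe_nonneg hs.2.le]

lemma continuousAt_of_periodic (hper : f.Periodic 1) (hf : ContinuousOn f (Set.Ioo 0 1)) {x : ℝ}
    (hx : x ∉ Set.range ((↑) : ℤ → ℝ)) : ContinuousAt f x := by
  have fract_mem : x - ⌊x⌋ ∈ Set.Ioo (0 : ℝ) 1 :=
    ⟨sub_pos.mpr (lt_of_le_of_ne (Int.floor_le x) fun h => hx ⟨_, h⟩), Int.fract_lt_one x⟩
  have translate_eq : (fun y => f (y - ⌊x⌋)) = f := by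
    funext y
    simpa using hper.sub_int_mul_eq ⌊x⌋ (x := y)
  rw [← translate_eq]
  exact ContinuousAt.comp (f := fun y => y - (⌊x⌋ : ℝ))
    (hf.continuousAt (isOpen_Ioo.mem_nhds fract_mem)) (by fun_prop)

lemma ae_continuousAt_of_periodic {ν : Measure ℝ} [NullSingletonClass ν] (hper : f.Periodic 1)
    (hf : ContinuousOn f (Set.Ioo 0 1)) : ∀ᵐ x ∂ν, ContinuousAt f x := by
  filter_upwards [(Set.countable_range ((↑) : ℤ → ℝ)).ae_notMem ν] with x hx
  exact continuousAt_of_periodic hper hf hx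

lemma isOpenPosMeasure_of_forall_sub_le {ν : Measure ℝ} {C : ℝ}
    (hν : ∀ u v, u ≤ v → v ≤ u + 1 → v - u ≤ C * ν.real (Set.Icc u v)) : ν.IsOpenPosMeasure where
  open_pos U hU hne hzero := by
    obtain ⟨x, hx⟩ := hne
    obtain ⟨r, hr, hball⟩ := Metric.isOpen_iff.mp hU x hx
    set s := min (r / 2) 1
    have hs : 0 < s := by positivity
    have Icc_subset : Set.Icc x (x + s) ⊆ U := fun y hy => hball <| by
      rw [Metric.mem_ball, Real.dist_eq, abs_of_nonneg (sub_nonneg.mpr hy.1)]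
      linarith [hy.2, min_le_left (r / 2) 1]
    have Icc_null : ν.real (Set.Icc x (x + s)) = 0 := by
      rw [measureReal_def, measure_mono_null Icc_subset hzero, ENNReal.toReal_zero]
    have := hν x (x + s) (by linarith) (by linarith [min_le_right (r / 2) 1])
    rw [Icc_null] at this
    linarith

lemma nullSingletonClass_of_forall_mul_real_le {ν : Measure ℝ} [IsLocallyFiniteMeasure ν] {c : ℝ}
    (hc : 0 < c) (hν : ∀ u v, u ≤ v → v ≤ u + 1 → c * ν.real (Set.Icc u v) ≤ v - u) :
    NullSingletonClass ν where
  measure_singleton x := by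
    have mul_le_zero := hν x x le_rfl (by linarith)
    rw [Set.Icc_self, sub_self] at mul_le_zero
    exact (measureReal_eq_zero_iff isCompact_singleton.measure_lt_top.ne).mp
      ((nonpos_of_mul_nonpos_right mul_le_zero hc).antisymm measureReal_nonneg)

lemma tendsto_dens_atTop {α : ℝ} (hα : Irrational α) :
    Tendsto (GenContFract.of α).dens atTop atTop := by
  have not_terminates : ¬ (GenContFract.of α).Terminates := fun h =>
    let ⟨p, hp⟩ := (GenContFract.terminates_iff_rat α).mp h
    hα ⟨p, hp.symm⟩
  refine tendsto_atTop_mono (fun k => ?_) tendsto_natCast_atTop_atTop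
  calc (k : ℝ) ≤ Nat.fib (k + 1) := by
        exact_mod_cast Nat.le_of_succ_le_succ (Nat.le_fib_add_one (k + 1))
    _ ≤ (GenContFract.of α).dens k :=
        GenContFract.succ_nth_fib_le_of_nth_den (.inr fun h => not_terminates ⟨_, h⟩)

end Specialization

/-- Singular points force large-deviation points: for large `k`, if `n`
is `(x, L(E) − δ, q_k)`-singular then `|P_{q_k}(T^a x, E)| ≤ e^{q_k(L(E) − δ/10)}` for all
`a ∈ [n − ⌊3q_k/4⌋, n − ⌊q_k/4⌋]`; moreover the number `N_k` of such `a` satisfies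
`(q_k + 1)/2 ≤ N_k ≤ (q_k + 3)/2`. -/
theorem singular_implies_large_deviation
    (f : ℝ → ℝ) (T : Equiv.Perm ℝ) (ν : Measure ℝ)
    (γm γp Cm Cp lam α : ℝ) (q : ℕ → ℕ) (E LE δ : ℝ)
    (hγm : 0 < γm) (hγp : 0 < γp) (hlam : 0 < lam)
    (hfper : ∀ t : ℝ, f (t + 1) = f t) (hf0 : f 0 = 0)
    (hf1 : Filter.Tendsto f (nhdsWithin 1 (Set.Iio 1)) (nhds 1))
    (hfLip : ∀ u v : ℝ, 0 ≤ u → u < v → v < 1 →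
      γm * (v - u) ≤ f v - f u ∧ f v - f u ≤ γp * (v - u))
    (hTmono : StrictMono ⇑T) (hTper : ∀ t : ℝ, T (t + 1) = T t + 1)
    (hαirr : Irrational α)
    (hrot : Filter.Tendsto (fun m : ℕ => (T ^ m) 0 / (m : ℝ)) Filter.atTop (nhds α))
    (hCm : 0 < Cm) (hCp : 0 < Cp)
    (hνprob : ν (Set.Ico (0 : ℝ) 1) = 1)
    (hνinv : MeasureTheory.Measure.map (⇑T) ν = ν)
    (hνper : MeasureTheory.Measure.map (fun t : ℝ => t + 1) ν = ν)
    (hcomp : ∀ u v : ℝ, u ≤ v → v ≤ u + 1 →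
      Cm * (ν (Set.Icc u v)).toReal ≤ v - u ∧ v - u ≤ Cp * (ν (Set.Icc u v)).toReal)
    (hqpos : ∀ m : ℕ, 0 < q m)
    (hqcf : ∀ m : ℕ, ((q m : ℕ) : ℝ) = (GenContFract.of α).dens m)
    (hLya : Filter.Tendsto (fun m : ℕ =>
      (1 / (m : ℝ)) * ∫ x in Set.Ico (0 : ℝ) 1, Real.log ‖transferM lam f T E x m‖ ∂ν)
      Filter.atTop (nhds LE))
    (hδ0 : 0 < δ) (hδL : δ < LE) :
    (∀ k : ℕ, ((q k : ℝ) + 1) / 2 ≤ ((3 * q k / 4 - q k / 4 + 1 : ℕ) : ℝ) ∧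
      ((3 * q k / 4 - q k / 4 + 1 : ℕ) : ℝ) ≤ ((q k : ℝ) + 3) / 2) ∧
    ∃ k0 : ℕ, ∀ k : ℕ, k0 ≤ k → ∀ x : ℝ, ∀ n : ℤ,
      ¬ RegularPt lam f T x E (LE - δ) (q k) n →
      ∀ a : ℤ, n - ((3 * q k / 4 : ℕ) : ℤ) ≤ a → a ≤ n - ((q k / 4 : ℕ) : ℤ) →
        |Pdet lam f T ((T ^ a) x) E (q k)| ≤ Real.exp ((q k : ℝ) * (LE - δ / 10)) := by
  have hν : IsCircleProbability ν := ⟨⟨measurable_add_const 1, hνper⟩, hνprob⟩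
  have := hν.isLocallyFiniteMeasure
  have := isOpenPosMeasure_of_forall_sub_le fun u v huv hv => (hcomp u v huv hv).2
  have := nullSingletonClass_of_forall_mul_real_le hCm fun u v huv hv => (hcomp u v huv hv).1
  have f_lipschitz : LipschitzOnWith γp.toNNReal f (Set.Ico 0 1) :=
    lipschitzOnWith_of_forall_lt hγp.le fun u hu v hv huv => by
      obtain ⟨lower, upper⟩ := hfLip u v hu.1 huv hv.2
      rwa [abs_of_nonneg ((mul_pos hγm (sub_pos.mpr huv)).le.trans lower)]
  obtain ⟨K, hK⟩ := exists_forall_abs_le_of_periodic hfper f_lipschitz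
  exact singular_implies_large_deviation_general hν hfper hK
    (ae_continuousAt_of_periodic hfper (f_lipschitz.continuousOn.mono Set.Ioo_subset_Ico_self))
    hTmono hTper ⟨hTmono.monotone.measurable, hνinv⟩ hαirr hrot hLya
    (tendsto_natCast_atTop_iff.mp ((tendsto_dens_atTop hαirr).congr fun k => (hqcf k).symm)) hδ0
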